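/- For all integers n ≥ 0, p̄(3n) ≡ p̄(27n) (mod 24). -/

import Mathlib

/-!
The proof rests on Gauss's identity: the generating function `P = ∑ pbar(n) q^n` satisfies
`P * φ = 1` with `φ = ∑_{k ∈ ℤ} (-1)^k q^(k^2)`. The generating function is
`∏ (1 + q^i) / ∏ (1 - q^i)`, and `φ * ∏ (1 + q^i) = ∏ (1 - q^i)` follows from an exact finite
identity of Shanks type (`finite_gauss`), whose right-hand side is `∏_{i ≤ n} (1 - q^i)` up to
multiples of `q^(n+1)`. The congruence is proved separately modulo `8` and modulo `3`.

Modulo `8`: write `φ = 1 + 2 S`. Then `P ≡ 1 - 2 S + 4 S^2`, and `S^2 ≡ S(q^2)` modulo `2`. The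
`9m`-th and `m`-th coefficients of `S` agree, since `9m` is a square if and only if `m` is, so the
same holds for `S(q^2)` and for `P` modulo `8`.

Modulo `3`: let `U` extract the coefficients of index divisible by `3`. Squares are `0` or `1`
modulo `3`, which yields `U φ = φ(q^3)` and `U (φ^2) = φ(q^3)^2`; and `f(q^3) = f^3` over `ZMod 3`.
Since `U (g(q^3) f) = g * U f`, it follows that `U P = U (P^3 φ^2) = P φ^6 = φ^5`,
`U (φ^5) = φ * φ^6 = φ^7` and `U (φ^7) = φ^2 * φ^3 = φ^5`. Hence `U^3 P = U P`.
-/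

open PowerSeries

/-- `pbar n` is the number of overpartitions of `n`: pairs `(μ, ν)` of partitions (multisets of
positive integers) with `|μ| + |ν| = n`, where `μ` has distinct parts. -/
noncomputable def pbar (n : ℕ) : ℕ :=
  Nat.card {p : Multiset ℕ × Multiset ℕ //
    p.1.Nodup ∧ (∀ i ∈ p.1, 0 < i) ∧ (∀ i ∈ p.2, 0 < i) ∧ p.1.sum + p.2.sum = n}

/-! ### Gauss's identity and the generating function -/

open Finset in
/-- A finite form of Gauss's identity. Every term with `s ≥ 1` on the right is a multiple of
`q ^ (n + 1)`. -/
theorem finite_gauss {R : Type*} [CommRing R] (q : R) (n : ℕ) :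
    (∏ j ∈ range n, (1 + q ^ (j + 1))) *
        (1 + 2 * ∑ k ∈ range n, (-1) ^ (k + 1) * q ^ ((k + 1) ^ 2)) =
      ∑ s ∈ range (n + 1), (-1) ^ s * q ^ (s * (n + 1)) * (∏ j ∈ range s, (1 + q ^ j)) *
        ∏ j ∈ Ico (s + 1) (n + 1), (1 - q ^ j) := by
  induction n with
  | zero => simp
  | succ n ih =>
    -- `G` telescopes the difference between the right-hand side at `n + 1`
    -- and `1 + q ^ (n + 1)` times the one at `n`.
    let G : ℕ → R := fun s => (-1) ^ s * q ^ (s * (n + 1)) * (∏ j ∈ range s, (1 + q ^ j)) *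
        ∏ j ∈ Ico s (n + 1), (1 - q ^ j)
    have key : ∀ s ∈ range (n + 1),
        (-1) ^ s * q ^ (s * (n + 1 + 1)) * (∏ j ∈ range s, (1 + q ^ j)) *
          ∏ j ∈ Ico (s + 1) (n + 1 + 1), (1 - q ^ j) =
        (1 + q ^ (n + 1)) * ((-1) ^ s * q ^ (s * (n + 1)) * (∏ j ∈ range s, (1 + q ^ j)) *
          ∏ j ∈ Ico (s + 1) (n + 1), (1 - q ^ j)) + (G (s + 1) - G s) := by
      intro s hs
      have hs' : s < n + 1 := by simpa using hs
      simp only [G]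
      rw [prod_Ico_succ_top (by omega), prod_eq_prod_Ico_succ_bot hs', prod_range_succ]
      ring
    rw [sum_range_succ _ (n + 1), sum_congr rfl key, sum_add_distrib, ← mul_sum, ← ih, sum_range_sub,
      prod_range_succ, sum_range_succ _ n]
    have hG0 : G 0 = 0 := by
      have h : ∏ j ∈ Ico 0 (n + 1), (1 - q ^ j) = 0 :=
        prod_eq_zero (i := 0) (by simp) (by simp)
      simp only [G]
      rw [h, mul_zero]
    have hP : ∏ j ∈ range (n + 1), (1 + q ^ j) = 2 * ∏ j ∈ range n, (1 + q ^ (j + 1)) := by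
      rw [prod_range_succ']
      ring
    simp only [G] at hG0 ⊢
    rw [hG0, hP]
    simp only [Ico_self, prod_empty]
    ring

/-- The series `S = ∑_{k ≥ 1} (-1)^k q^(k^2)`; the sign is `(-1)^n` at `n = k^2` because `k` and
`k^2` have the same parity. -/
noncomputable def halfTheta : ℤ⟦X⟧ :=
  PowerSeries.mk fun n => if IsSquare n ∧ 0 < n then (-1) ^ n else 0

/-- Gauss's theta series `φ(-q) = ∑_{k ∈ ℤ} (-1)^k q^(k^2) = 1 + 2 S`. -/
noncomputable def thetaSeries : ℤ⟦X⟧ := 1 + 2 * halfTheta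

/-- The generating function of overpartitions. -/
noncomputable def overGen : ℤ⟦X⟧ := PowerSeries.mk fun n => (pbar n : ℤ)

theorem coeff_finite_halfTheta {m n : ℕ} (h : m ≤ n) :
    coeff m (∑ k ∈ Finset.range n, (-1) ^ (k + 1) * (X : ℤ⟦X⟧) ^ ((k + 1) ^ 2)) =
      coeff m halfTheta := by
  have hc : ∀ k : ℕ, coeff m ((-1) ^ (k + 1) * (X : ℤ⟦X⟧) ^ ((k + 1) ^ 2)) =
      if m = (k + 1) ^ 2 then (-1) ^ (k + 1) else 0 := by
    intro k
    have : ((-1) ^ (k + 1) : ℤ⟦X⟧) = C ((-1) ^ (k + 1)) := by simp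
    rw [this, coeff_C_mul, coeff_X_pow]
    simp
  rw [map_sum, Finset.sum_congr rfl fun k _ => hc k, halfTheta, coeff_mk]
  split_ifs with hs
  · obtain ⟨⟨r, rfl⟩, hr⟩ := hs
    obtain ⟨k, rfl⟩ : ∃ k, r = k + 1 := ⟨r - 1, by
      have : r ≠ 0 := by rintro rfl; simp at hr
      omega⟩
    rw [Finset.sum_eq_single k]
    · rw [if_pos (by ring), pow_mul]
      rcases Nat.even_or_odd (k + 1) with hk | hk
      · simp [hk.neg_one_pow]
      · simp [hk.neg_one_pow]
    · intro b _ hb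
      rw [if_neg]
      intro hh
      apply hb
      have : (k + 1) ^ 2 = (b + 1) ^ 2 := by rw [← hh]; ring
      have := Nat.pow_left_injective (n := 2) (by norm_num) this
      omega
    · intro hk
      exfalso
      apply hk
      rw [Finset.mem_range]
      nlinarith
  · apply Finset.sum_eq_zero
    intro k _
    rw [if_neg]
    rintro rfl
    exact hs ⟨⟨k + 1, by ring⟩, by positivity⟩

theorem coeff_finite_gauss {m n : ℕ} (h : m ≤ n) :
    coeff m ((∏ j ∈ Finset.range n, (1 + (X : ℤ⟦X⟧) ^ (j + 1))) *
        (1 + 2 * ∑ k ∈ Finset.range n, (-1) ^ (k + 1) * X ^ ((k + 1) ^ 2))) =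
      coeff m (∏ j ∈ Finset.range n, (1 - (X : ℤ⟦X⟧) ^ (j + 1))) := by
  rw [finite_gauss, Finset.sum_range_succ', map_add, map_sum, Finset.sum_eq_zero]
  · rw [zero_add]
    congr 1
    rw [Finset.prod_Ico_eq_prod_range]
    simp [add_comm]
  · intro s _
    refine (X_pow_dvd_iff (n := n + 1)).mp ?_ m (by omega)
    apply Dvd.dvd.mul_right
    apply Dvd.dvd.mul_right
    apply Dvd.dvd.mul_left
    exact pow_dvd_pow _ (by nlinarith)

/-- Overpartitions counted by the sizes of their two components. Distinct parts are encoded as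
multiplicities below `2`, matching the generating functions available for partitions. -/
theorem pbar_eq_sum (n : ℕ) : pbar n = ∑ x ∈ Finset.HasAntidiagonal.antidiagonal n,
    (Nat.Partition.countRestricted x.1 2).card *
      (Nat.Partition.restricted x.2 fun _ => True).card := by
  have hfun : ∀ (x : Finset.HasAntidiagonal.antidiagonal n) (μ : Nat.Partition.distincts x.1.1)
      (ν : Nat.Partition x.1.2), μ.1.parts.Nodup ∧ (∀ i ∈ μ.1.parts, 0 < i) ∧
        (∀ i ∈ ν.parts, 0 < i) ∧ μ.1.parts.sum + ν.parts.sum = n := by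
    rintro ⟨⟨a, b⟩, hx⟩ ⟨μ, hμ⟩ ν
    refine ⟨by simpa [Nat.Partition.distincts] using hμ, fun i hi => μ.parts_pos hi,
      fun i hi => ν.parts_pos hi, ?_⟩
    rw [μ.parts_sum, ν.parts_sum]
    simpa using hx
  let f : (Σ x : Finset.HasAntidiagonal.antidiagonal n, Nat.Partition.distincts x.1.1 × Nat.Partition x.1.2) →
      {p : Multiset ℕ × Multiset ℕ //
        p.1.Nodup ∧ (∀ i ∈ p.1, 0 < i) ∧ (∀ i ∈ p.2, 0 < i) ∧ p.1.sum + p.2.sum = n} :=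
    fun y => ⟨(y.2.1.1.parts, y.2.2.parts), hfun y.1 y.2.1 y.2.2⟩
  have hf : Function.Bijective f := by
    constructor
    · rintro ⟨⟨⟨a, b⟩, hx⟩, ⟨μ, hμ⟩, ν⟩ ⟨⟨⟨a', b'⟩, hx'⟩, ⟨μ', hμ'⟩, ν'⟩ h
      simp only [f, Subtype.mk.injEq, Prod.mk.injEq] at h
      obtain ⟨h1, h2⟩ := h
      have ha : a = a' := by
        have h := congrArg Multiset.sum h1
        rwa [μ.parts_sum, μ'.parts_sum] at h
      have hb : b = b' := by
        have h := congrArg Multiset.sum h2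
        rwa [ν.parts_sum, ν'.parts_sum] at h
      subst ha hb
      obtain rfl := Nat.Partition.ext h1
      obtain rfl := Nat.Partition.ext h2
      rfl
    · rintro ⟨⟨μ, ν⟩, h1, h2, h3, h4⟩
      exact ⟨⟨⟨(μ.sum, ν.sum), by simpa using h4⟩,
        ⟨⟨μ, fun hi => h2 _ hi, rfl⟩, by simpa [Nat.Partition.distincts] using h1⟩,
        ⟨ν, fun hi => h3 _ hi, rfl⟩⟩, rfl⟩
  rw [pbar, ← Nat.card_eq_of_bijective f hf, Nat.card_eq_fintype_card, Fintype.card_sigma]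
  rw [← Finset.sum_coe_sort (Finset.HasAntidiagonal.antidiagonal n) fun x =>
    (Nat.Partition.countRestricted x.1 2).card *
      (Nat.Partition.restricted x.2 fun _ => True).card]
  refine Fintype.sum_congr _ _ fun x => ?_
  rw [Fintype.card_prod, Nat.Partition.countRestricted_two]
  simp [Nat.Partition.restricted]

open PowerSeries.WithPiTopology Filter Topology in
/-- Gauss's identity for overpartitions. It is obtained as the coefficientwise limit of
`coeff_finite_gauss`. -/
theorem overGen_mul_theta : overGen * thetaSeries = 1 := by
  have hD := Nat.Partition.hasProd_powerSeriesMk_card_countRestricted ℤ (m := 2) (by norm_num)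
  have hQ := Nat.Partition.hasProd_powerSeriesMk_card_restricted ℤ (fun _ => True)
  have hE := (multipliable_one_sub_X_pow ℤ).hasProd
  set D : ℤ⟦X⟧ := PowerSeries.mk fun n ↦ ((Nat.Partition.countRestricted n 2).card : ℤ) with hDdef
  set Q : ℤ⟦X⟧ :=
    PowerSeries.mk fun n ↦ ((Nat.Partition.restricted n fun _ => True).card : ℤ) with hQdef
  set E : ℤ⟦X⟧ := ∏' n, ((1 : ℤ⟦X⟧) - X ^ (n + 1)) with hEdef
  have hQE : Q * E = 1 := by
    have h := hQ.mul hE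
    refine h.unique ?_
    convert! hasProd_one using 2 with i
    simp only [if_true, pow_mul]
    exact tsum_pow_mul_one_sub_of_constantCoeff_eq_zero (by simp)
  have hOG : overGen = D * Q := by
    ext n
    rw [overGen, coeff_mk, pbar_eq_sum, coeff_mul]
    simp [hDdef, hQdef]
  have hDE : D * thetaSeries = E := by
    have hD' := hD.tendsto_prod_nat
    have hE' := hE.tendsto_prod_nat
    have hT : Tendsto (fun n => 1 + 2 * ∑ k ∈ Finset.range n,
        (-1) ^ (k + 1) * (X : ℤ⟦X⟧) ^ ((k + 1) ^ 2)) atTop (𝓝 thetaSeries) := by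
      refine tendsto_const_nhds.add (tendsto_const_nhds.mul ?_)
      rw [tendsto_iff_coeff_tendsto]
      intro m
      refine tendsto_const_nhds.congr' ?_
      filter_upwards [eventually_ge_atTop m] with n hn
      exact (coeff_finite_halfTheta hn).symm
    have hL := hD'.mul hT
    ext m
    have h1 := (tendsto_iff_coeff_tendsto _ _ _ _).mp hL m
    have h2 := (tendsto_iff_coeff_tendsto _ _ _ _).mp hE' m
    refine tendsto_nhds_unique (h1.congr' ?_) h2
    filter_upwards [eventually_ge_atTop m] with n hn
    rw [← coeff_finite_gauss hn]
    simp [Finset.sum_range_succ]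
  calc overGen * thetaSeries = Q * (D * thetaSeries) := by rw [hOG]; ring
    _ = 1 := by rw [hDE, hQE]

theorem expand_eq_pow (p : ℕ) [Fact p.Prime] (hp : p ≠ 0) (f : (ZMod p)⟦X⟧) :
    expand p hp f = f ^ p := by
  have h := MvPowerSeries.map_frobenius_expand (σ := Unit) (R := ZMod p) p hp (f := f)
  rw [ZMod.frobenius_zmod] at h
  rw [← h]
  rfl

/-! ### Congruence modulo 8 -/

theorem isSquare_nine_mul (m : ℕ) : IsSquare (9 * m) ↔ IsSquare m := by
  constructor
  · rintro ⟨r, hr⟩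
    obtain ⟨s, rfl⟩ : 3 ∣ r := by
      have : 3 ∣ r * r := ⟨3 * m, by omega⟩
      exact (Nat.prime_three.dvd_mul.mp this).elim id id
    exact ⟨s, by nlinarith⟩
  · rintro ⟨s, rfl⟩
    exact ⟨3 * s, by ring⟩

theorem coeff_nine_halfTheta (m : ℕ) : coeff (9 * m) halfTheta = coeff m halfTheta := by
  simp only [halfTheta, coeff_mk, isSquare_nine_mul, pow_mul]
  norm_num

theorem coeff_nine_halfTheta_sq (m : ℕ) :
    (coeff (9 * m) (halfTheta ^ 2) : ℤ) ≡ coeff m (halfTheta ^ 2) [ZMOD 2] := by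
  apply (ZMod.intCast_eq_intCast_iff _ _ 2).mp
  have h : ∀ k, ((coeff k (halfTheta ^ 2) : ℤ) : ZMod 2) =
      if 2 ∣ k then ((coeff (k / 2) halfTheta : ℤ) : ZMod 2) else 0 := by
    intro k
    have h1 : ((coeff k (halfTheta ^ 2) : ℤ) : ZMod 2) =
        coeff k ((map (Int.castRingHom (ZMod 2)) halfTheta) ^ 2) := by
      rw [← map_pow, coeff_map]; rfl
    rw [h1, ← expand_eq_pow 2 (by norm_num), coeff_expand]
    simp
  rw [h, h]
  by_cases hm : 2 ∣ m
  · obtain ⟨k, rfl⟩ := hm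
    rw [if_pos (by omega), if_pos (by omega), show 9 * (2 * k) / 2 = 9 * k by omega,
      coeff_nine_halfTheta, show 2 * k / 2 = k by omega]
  · rw [if_neg (by omega), if_neg hm]

theorem pbar_nine_mod_eight (m : ℕ) : (pbar m : ℤ) ≡ pbar (9 * m) [ZMOD 8] := by
  have hP : overGen = 1 - C 2 * halfTheta + C 4 * halfTheta ^ 2 -
      C 8 * (halfTheta ^ 3 * overGen) := by
    have h := overGen_mul_theta
    rw [thetaSeries] at h
    have h2 : (C 2 : ℤ⟦X⟧) = 2 := rfl
    have h4 : (C 4 : ℤ⟦X⟧) = 4 := rfl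
    have h8 : (C 8 : ℤ⟦X⟧) = 8 := rfl
    rw [h2, h4, h8]
    linear_combination (1 - 2 * halfTheta + 4 * halfTheta ^ 2) * h
  have hc : ∀ k, ((pbar k : ℕ) : ℤ) = coeff k (1 : ℤ⟦X⟧) - 2 * coeff k halfTheta +
      4 * coeff k (halfTheta ^ 2) - 8 * coeff k (halfTheta ^ 3 * overGen) := by
    intro k
    have h : ((pbar k : ℕ) : ℤ) = coeff k overGen := by simp [overGen]
    rw [h]
    conv_lhs => rw [hP]
    simp only [map_sub, map_add, coeff_C_mul]
  rw [hc m, hc (9 * m), coeff_nine_halfTheta]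
  have h1 : coeff (9 * m) (1 : ℤ⟦X⟧) = coeff m (1 : ℤ⟦X⟧) := by simp [coeff_one]
  rw [h1]
  have h2 := coeff_nine_halfTheta_sq m
  rw [Int.modEq_iff_dvd] at h2 ⊢
  omega

/-! ### Congruence modulo 3 -/

/-- The theta series `φ(-q)` with coefficients in `ZMod 3`. -/
noncomputable def thetaThree : (ZMod 3)⟦X⟧ := map (Int.castRingHom (ZMod 3)) thetaSeries

theorem coeff_thetaThree (n : ℕ) : coeff n thetaThree =
    if n = 0 then 1 else if IsSquare n then 2 * (-1) ^ n else 0 := by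
  have h2 : (2 : ℤ⟦X⟧) = C 2 := rfl
  rw [thetaThree, coeff_map, thetaSeries, h2, map_add, coeff_C_mul, halfTheta, coeff_mk, coeff_one]
  rcases Nat.eq_zero_or_pos n with rfl | hn
  · simp
  · rw [if_neg hn.ne', if_neg hn.ne']
    split_ifs <;> simp_all

/-- `coeff (3 * n)` reads off the first component of the dissection of a series modulo `3`. -/
theorem coeff_three_mul_dissection (a b c : (ZMod 3)⟦X⟧) (n : ℕ) :
    coeff (3 * n) (a ^ 3 + X * b ^ 3 + X ^ 2 * c ^ 3) = coeff n a := by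
  have h3 : (3 : ℕ) ≠ 0 := by norm_num
  simp only [← expand_eq_pow 3 h3]
  rw [map_add, map_add, coeff_expand_mul]
  rcases n with _ | n
  · simp [coeff_zero_eq_constantCoeff]
  · rw [show 3 * (n + 1) = (3 * n + 2) + 1 by ring, coeff_succ_X_mul,
      coeff_expand_of_not_dvd 3 h3 b (by omega),
      show 3 * n + 2 + 1 = (3 * n + 1) + 2 by ring, coeff_X_pow_mul,
      coeff_expand_of_not_dvd 3 h3 c (by omega)]
    simp

/-- The 3-dissection of the theta series. The first component is `φ(q^9) = (φ^3)^3`, and there is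
no component for the residue `2`, which is not a square modulo `3`. -/
theorem thetaThree_dissection : ∃ b, thetaThree = (thetaThree ^ 3) ^ 3 + X * b ^ 3 := by
  have h3 : (3 : ℕ) ≠ 0 := by norm_num
  refine ⟨PowerSeries.mk fun n => coeff (3 * n + 1) thetaThree, ?_⟩
  simp only [← expand_eq_pow 3 h3]
  ext n
  rw [map_add]
  obtain ⟨k, hk | hk | hk⟩ : ∃ k, n = 3 * k ∨ n = 3 * k + 1 ∨ n = 3 * k + 2 :=
    ⟨n / 3, by omega⟩
  · have hX : coeff n (X * expand 3 h3
        (PowerSeries.mk fun n => coeff (3 * n + 1) thetaThree)) = 0 := by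
      rcases k with _ | k
      · simp [hk]
      · rw [show n = (3 * k + 2) + 1 by omega, coeff_succ_X_mul,
          coeff_expand_of_not_dvd 3 h3 _ (by omega)]
    rw [hX, add_zero, hk, coeff_expand_mul, coeff_expand]
    split_ifs with hd
    · obtain ⟨m, rfl⟩ := hd
      rw [show 3 * m / 3 = m by omega, show 3 * (3 * m) = 9 * m by ring, coeff_thetaThree,
        coeff_thetaThree]
      simp only [isSquare_nine_mul, pow_mul]
      norm_num
    · rw [coeff_thetaThree, if_neg (by omega), if_neg]
      rintro ⟨r, hr⟩
      have h : 3 ∣ r * r := ⟨k, hr.symm⟩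
      obtain ⟨s, rfl⟩ : 3 ∣ r := (Nat.prime_three.dvd_mul.mp h).elim id id
      exact hd ⟨s * s, by nlinarith⟩
  · rw [hk, coeff_expand_of_not_dvd 3 h3 _ (by omega), coeff_succ_X_mul, coeff_expand_mul]
    simp
  · rw [hk, coeff_expand_of_not_dvd 3 h3 _ (by omega), show 3 * k + 2 = (3 * k + 1) + 1 by ring,
      coeff_succ_X_mul, coeff_expand_of_not_dvd 3 h3 _ (by omega), coeff_thetaThree,
      if_neg (by omega), if_neg]
    · simp
    · rintro ⟨r, hr⟩
      have h : (3 * k + 1 + 1) % 3 = (r % 3) * (r % 3) % 3 := by rw [hr, Nat.mul_mod]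
      have hr3 : r % 3 < 3 := Nat.mod_lt _ (by norm_num)
      interval_cases r % 3 <;> omega

theorem coeff_three_mul_theta (g : (ZMod 3)⟦X⟧) (n : ℕ) :
    coeff (3 * n) (g ^ 3 * thetaThree) = coeff n (g * thetaThree ^ 3) := by
  obtain ⟨b, hb⟩ := thetaThree_dissection
  rw [← coeff_three_mul_dissection (g * thetaThree ^ 3) (g * b) 0]
  congr 1
  linear_combination g ^ 3 * hb

theorem coeff_three_mul_theta_sq (g : (ZMod 3)⟦X⟧) (n : ℕ) :
    coeff (3 * n) (g ^ 3 * thetaThree ^ 2) = coeff n (g * thetaThree ^ 6) := by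
  obtain ⟨b, hb⟩ := thetaThree_dissection
  -- The middle component `2 φ^3 b` is written as a cube using `2 = 2 ^ 3` in `ZMod 3`.
  have h2 : (2 : (ZMod 3)⟦X⟧) ^ 3 = 2 := by
    have h : (2 : (ZMod 3)⟦X⟧) = C 2 := rfl
    rw [h, ← map_pow]
    congr 1
  rw [← coeff_three_mul_dissection (g * thetaThree ^ 6) (2 * g * thetaThree ^ 3 * b) (g * b ^ 2)]
  generalize thetaThree = F at hb ⊢
  refine congrArg (coeff (3 * n)) ?_
  linear_combination g ^ 3 * (F + (F ^ 3) ^ 3 + X * b ^ 3) * hb - X * g ^ 3 * F ^ 9 * b ^ 3 * h2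

theorem pbar_mod_three (n : ℕ) : (pbar (3 * n) : ℤ) ≡ pbar (27 * n) [ZMOD 3] := by
  apply (ZMod.intCast_eq_intCast_iff _ _ 3).mp
  set P : (ZMod 3)⟦X⟧ := map (Int.castRingHom (ZMod 3)) overGen with hP
  have hc : ∀ k, (((pbar k : ℕ) : ℤ) : ZMod 3) = coeff k P := by
    intro k
    simp [hP, overGen]
  have hPF : P * thetaThree = 1 := by
    rw [hP, thetaThree, ← map_mul, overGen_mul_theta, map_one]
  have h1 : ∀ k, coeff (3 * k) P = coeff k (thetaThree ^ 5) := by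
    intro k
    have e1 : P = P ^ 3 * thetaThree ^ 2 := by
      linear_combination (-P * (P * thetaThree + 1)) * hPF
    have e2 : thetaThree ^ 5 = P * thetaThree ^ 6 := by
      linear_combination (-thetaThree ^ 5) * hPF
    rw [e2, ← coeff_three_mul_theta_sq, ← e1]
  have h2 : ∀ k, coeff (3 * k) (thetaThree ^ 5) = coeff k (thetaThree ^ 7) := by
    intro k
    have h := coeff_three_mul_theta_sq thetaThree k
    rwa [show thetaThree ^ 3 * thetaThree ^ 2 = thetaThree ^ 5 by ring,
      show thetaThree * thetaThree ^ 6 = thetaThree ^ 7 by ring] at h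
  have h3 : ∀ k, coeff (3 * k) (thetaThree ^ 7) = coeff k (thetaThree ^ 5) := by
    intro k
    have h := coeff_three_mul_theta (thetaThree ^ 2) k
    rwa [show (thetaThree ^ 2) ^ 3 * thetaThree = thetaThree ^ 7 by ring,
      show thetaThree ^ 2 * thetaThree ^ 3 = thetaThree ^ 5 by ring] at h
  rw [hc, hc, show 27 * n = 3 * (3 * (3 * n)) by ring, h1, h1, h2, h3]

theorem pbar_internal_congruence (n : ℕ) :
    pbar (3 * n) ≡ pbar (27 * n) [MOD 24] := by
  have h8 := pbar_nine_mod_eight (3 * n)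
  rw [show 9 * (3 * n) = 27 * n by ring] at h8
  have h3 := pbar_mod_three n
  rw [← Int.natCast_modEq_iff]
  rw [Int.modEq_iff_dvd] at *
  push_cast
  omega
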